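/- Let ⟦a_1, a_2, …, a_m⟧ denote the MV assignment M^{a_1} V^{a_2} M^{a_3} ⋯ consisting of m alternating blocks with positive sizes a_1, …, a_m (the first block being mountains), on the 1×(1 + a_1 + ⋯ + a_m) strip of stamps. Then a_1 · ∏_{i=2}^{m} min(a_{i−1}+1, a_i) ≤ c(⟦a_1, a_2, …, a_m⟧) ≤ a_1 · ∏_{i=2}^{m} (a_i + 2·Σ_{j=1}^{i−1} a_j). -/

import Mathlib

/-- A crease direction: mountain or valley. -/
inductive MV : Type
  | M : MV
  | V : MV
deriving DecidableEq

/-- The value `σ(i)` of a layer ordering at face `i`, as a natural number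
(`0` if `i` is out of range). -/
def faceVal {n : ℕ} (σ : Equiv.Perm (Fin n)) (i : ℕ) : ℕ :=
  if h : i < n then (σ ⟨i, h⟩ : Fin n) else 0

/-- Condition (1): the layer ordering respects the mountain–valley assignment. -/
def MVRelations (n : ℕ) (μ : ℕ → MV) (σ : Equiv.Perm (Fin n)) : Prop :=
  ∀ i, i + 1 < n →
    if (μ i = MV.M ∧ Even i) ∨ (μ i = MV.V ∧ Odd i)
    then faceVal σ (i + 1) < faceVal σ i
    else faceVal σ i < faceVal σ (i + 1)

/-- `x` lies strictly between `lo` and `hi` (in either order). -/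
def StrictlyBetween (x a b : ℕ) : Prop := min a b < x ∧ x < max a b

/-- Condition (2): no two creases on the same side cross. -/
def NoCrossings (n : ℕ) (σ : Equiv.Perm (Fin n)) : Prop :=
  ∀ i j, i + 1 < n → j + 1 < n → i % 2 = j % 2 →
    ¬ Xor' (StrictlyBetween (faceVal σ j) (faceVal σ i) (faceVal σ (i + 1)))
           (StrictlyBetween (faceVal σ (j + 1)) (faceVal σ i) (faceVal σ (i + 1)))

/-- A valid layer ordering for the MV assignment `μ` on the `1 × n` strip. -/
def ValidLayerOrdering (n : ℕ) (μ : ℕ → MV) (σ : Equiv.Perm (Fin n)) : Prop :=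
  MVRelations n μ σ ∧ NoCrossings n σ

/-- `c(μ)`: the number of valid layer orderings for `μ` on the `1 × n` strip. -/
noncomputable def foldCount (n : ℕ) (μ : ℕ → MV) : ℕ :=
  Nat.card {σ : Equiv.Perm (Fin n) // ValidLayerOrdering n μ σ}

/-- The MV assignment `⟦a_0, a_1, …, a_{m−1}⟧` with `m` alternating blocks of sizes
`a 0, …, a (m−1)`: crease `k` lies in block `t`, where `t` is the largest index with
`a 0 + ⋯ + a (t−1) ≤ k`; even-indexed blocks are mountains and odd-indexed blocks
are valleys. -/
def blockAssignment (m : ℕ) (a : ℕ → ℕ) : ℕ → MV := fun k =>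
  if Even (Nat.findGreatest (fun t => ∑ j ∈ Finset.range t, a j ≤ k) m) then MV.M else MV.V

/-!
Count the ways to add a block of `a` creases to a folding of the faces `0, …, c`. Within a block
the creases alternate between up and down, so the strip first spirals outwards and, once it turns
inwards, can never leave the crease it has entered: where it turns determines the order of the
faces of the block. This turn and the gap between the old faces in which the strip ends determine
the whole folding: going from face `c` down to face `0`, if two such foldings first disagreed at
face `j`, each would trap its last face on its own side of `j`. If the strip ends above or below
all old faces, there are at most `a` turns. In each of the `c` inner gaps the possible turns have
the same parity and differ by at most `2`, so there are at most two of them.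

For the lower bound, a block with the opposite label can retrace the previous one, of `b` creases:
its creases wrap around the earlier faces one by one. It may stop after any number `s` of these
steps, `s < min (b + 1) a`, and tuck all remaining faces in next to their predecessors. The first
block can spiral outwards for any `s < a` steps before doing so.
-/

theorem mem_uIoo_iff {α : Type*} [LinearOrder α] {a b c : α} :
    a ∈ Set.uIoo b c ↔ b < a ∧ a < c ∨ c < a ∧ a < b := by
  rcases le_total b c with h | h
  · rw [Set.uIoo_of_le h, Set.mem_Ioo]
    exact ⟨Or.inl, fun h' => h'.elim id fun h' => absurd (h'.1.trans h'.2) h.not_gt⟩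
  · rw [Set.uIoo_of_ge h, Set.mem_Ioo]
    exact ⟨Or.inr, fun h' => h'.elim (fun h' => absurd (h'.1.trans h'.2) h.not_gt) id⟩

/-- Crease `(i, i + 1)` wraps around face `j` when the faces sit at heights `x`. Only the relative
order of the heights matters; integer values make the mirror image `-x` available, and leave room
for new faces after doubling. -/
def Wraps (x : ℕ → ℤ) (i j : ℕ) : Prop := x j ∈ Set.uIoo (x i) (x (i + 1))

theorem wraps_iff {x : ℕ → ℤ} {i j : ℕ} :
    Wraps x i j ↔ x i < x j ∧ x j < x (i + 1) ∨ x (i + 1) < x j ∧ x j < x i :=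
  mem_uIoo_iff

theorem wraps_neg {x : ℕ → ℤ} {i j : ℕ} : Wraps (-x) i j ↔ Wraps x i j := by
  simp only [wraps_iff, Pi.neg_apply, neg_lt_neg_iff]
  omega

/-- The heights `x` and `y` order the faces `s, …, n - 1` in the same way. -/
def SameOrder (s n : ℕ) (x y : ℕ → ℤ) : Prop :=
  ∀ i j, s ≤ i → i < n → s ≤ j → j < n → (x i < x j ↔ y i < y j)

section SameOrder

variable {s n : ℕ} {x y z : ℕ → ℤ}

theorem SameOrder.symm (h : SameOrder s n x y) : SameOrder s n y x :=
  fun i j hi hi' hj hj' => (h i j hi hi' hj hj').symm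

theorem SameOrder.trans (h : SameOrder s n x y) (h' : SameOrder s n y z) : SameOrder s n x z :=
  fun i j hi hi' hj hj' => (h i j hi hi' hj hj').trans (h' i j hi hi' hj hj')

theorem SameOrder.mono {s' n' : ℕ} (h : SameOrder s n x y) (hs : s ≤ s') (hn : n' ≤ n) :
    SameOrder s' n' x y :=
  fun i j hi hi' hj hj' => h i j (hs.trans hi) (hi'.trans_le hn) (hs.trans hj) (hj'.trans_le hn)

theorem SameOrder.neg (h : SameOrder s n x y) : SameOrder s n (-x) (-y) := by
  intro i j hi hi' hj hj'
  simpa only [Pi.neg_apply, neg_lt_neg_iff] using h j i hj hj' hi hi'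

theorem SameOrder.wraps_iff_wraps {i j : ℕ} (h : SameOrder s n x y) (hi : s ≤ i)
    (hi' : i + 1 < n) (hj : s ≤ j) (hj' : j < n) : Wraps x i j ↔ Wraps y i j := by
  rw [wraps_iff, wraps_iff, h i j hi (by omega) hj hj', h j i hj hj' hi (by omega),
    h j (i + 1) hj hj' (by omega) hi', h (i + 1) j (by omega) hi' hj hj']

end SameOrder

/-- The heights `x` of the faces `0, …, n - 1` fold the strip flat, where `up i` says that face
`i + 1` is to lie above face `i`. -/
structure IsFold (up : ℕ → Prop) (n : ℕ) (x : ℕ → ℤ) : Prop where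
  injOn : Set.InjOn x (Set.Iio n)
  lt_succ_iff : ∀ i, i + 1 < n → (x i < x (i + 1) ↔ up i)
  wraps_iff_succ : ∀ i j, i + 1 < n → j + 1 < n → i % 2 = j % 2 →
    (Wraps x i j ↔ Wraps x i (j + 1))

section IsFold

variable {up : ℕ → Prop} {n : ℕ} {x y : ℕ → ℤ}

theorem IsFold.ne {i j : ℕ} (h : IsFold up n x) (hi : i < n) (hj : j < n) (hij : i ≠ j) :
    x i ≠ x j :=
  h.injOn.ne hi hj hij

theorem IsFold.mono {n' : ℕ} (h : IsFold up n x) (hn : n' ≤ n) : IsFold up n' x where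
  injOn := h.injOn.mono (Set.Iio_subset_Iio hn)
  lt_succ_iff i hi := h.lt_succ_iff i (hi.trans_le hn)
  wraps_iff_succ i j hi hj := h.wraps_iff_succ i j (hi.trans_le hn) (hj.trans_le hn)

theorem IsFold.neg (h : IsFold up n x) : IsFold (fun i => ¬ up i) n (-x) where
  injOn := neg_injective.comp_injOn h.injOn
  lt_succ_iff i hi := by
    have hne := h.ne (i := i) (j := i + 1) (by omega) hi (by omega)
    rw [← h.lt_succ_iff i hi, Pi.neg_apply, Pi.neg_apply]
    omega
  wraps_iff_succ i j hi hj hij := by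
    rw [wraps_neg, wraps_neg, h.wraps_iff_succ i j hi hj hij]

theorem sameOrder_of_forall_lt {s : ℕ} (hx : IsFold up n x) (hy : IsFold up n y)
    (h : ∀ i j, s ≤ i → i < j → j < n → (x i < x j ↔ y i < y j)) : SameOrder s n x y := by
  intro i j hi hi' hj hj'
  rcases lt_trichotomy i j with hij | rfl | hij
  · exact h i j hi hij hj'
  · simp only [lt_self_iff_false]
  · have := h j i hj hij hi'
    have := hx.ne hi' hj' hij.ne'
    have := hy.ne hi' hj' hij.ne'
    omega

theorem SameOrder.isFold (h : SameOrder 0 n x y) (hy : IsFold up n y) : IsFold up n x where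
  injOn i hi j hj hij := by
    by_contra hne
    have := hy.ne hi hj hne
    have := h i j zero_le hi zero_le hj
    have := h j i zero_le hj zero_le hi
    omega
  lt_succ_iff i hi := by
    rw [h i (i + 1) zero_le (by omega) zero_le hi, hy.lt_succ_iff i hi]
  wraps_iff_succ i j hi hj hij := by
    rw [h.wraps_iff_wraps zero_le hi zero_le (by omega),
      h.wraps_iff_wraps zero_le hi zero_le hj, hy.wraps_iff_succ i j hi hj hij]

end IsFold

/-- The creases between the faces `c, …, n - 1` alternately go up and down, as they do inside a
block of equal mountain-valley labels. -/
def AlternatesOn (up : ℕ → Prop) (c n : ℕ) : Prop :=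
  ∀ i j, c ≤ i → i + 1 < n → c ≤ j → j + 1 < n → ((up i ↔ up j) ↔ i % 2 = j % 2)

section AlternatesOn

variable {up : ℕ → Prop} {c n : ℕ} {x y : ℕ → ℤ}

theorem AlternatesOn.not (hup : AlternatesOn up c n) : AlternatesOn (fun i => ¬ up i) c n := by
  intro i j hi hi' hj hj'
  rw [not_iff_not, hup i j hi hi' hj hj']

theorem AlternatesOn.mono {n' : ℕ} (hup : AlternatesOn up c n) (hn : n' ≤ n) :
    AlternatesOn up c n' :=
  fun i j hi hi' hj hj' => hup i j hi (hi'.trans_le hn) hj (hj'.trans_le hn)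

theorem AlternatesOn.succ_iff {i : ℕ} (hup : AlternatesOn up c n) (hi : c ≤ i) (hn : i + 2 < n) :
    up (i + 1) ↔ ¬ up i := by
  have := hup (i + 1) i (by omega) (by omega) hi (by omega)
  have : ¬ (i + 1) % 2 = i % 2 := by omega
  tauto

theorem AlternatesOn.add_two_iff {i : ℕ} (hup : AlternatesOn up c n) (hi : c ≤ i)
    (hn : i + 3 < n) : up (i + 2) ↔ up i :=
  (hup (i + 2) i (by omega) (by omega) hi (by omega)).2 (by omega)

theorem IsFold.zigzag {i : ℕ} (h : IsFold up n x) (hup : AlternatesOn up c n) (hi : c ≤ i)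
    (hn : i + 2 < n) :
    x i < x (i + 1) ∧ x (i + 2) < x (i + 1) ∨ x (i + 1) < x i ∧ x (i + 1) < x (i + 2) := by
  have h₁ : x (i + 1) < x (i + 2) ↔ ¬ x i < x (i + 1) := by
    rw [h.lt_succ_iff (i + 1) hn, h.lt_succ_iff i (by omega), hup.succ_iff hi hn]
  have := h.ne (i := i) (j := i + 1) (by omega) (by omega) (by omega)
  have := h.ne (i := i + 1) (j := i + 2) (by omega) (by omega) (by omega)
  omega

theorem IsFold.wraps_or_wraps {i : ℕ} (h : IsFold up n x) (hup : AlternatesOn up c n)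
    (hi : c ≤ i) (hn : i + 2 < n) : Wraps x i (i + 2) ∨ Wraps x (i + 1) i := by
  have := h.zigzag hup hi hn
  have := h.ne (i := i) (j := i + 2) (by omega) (by omega) (by omega)
  simp only [wraps_iff, Nat.add_assoc, Nat.reduceAdd]
  omega

theorem IsFold.wraps_succ_of_wraps {i : ℕ} (h : IsFold up n x) (hup : AlternatesOn up c n)
    (hi : c ≤ i) (hn : i + 3 < n) (hw : Wraps x i (i + 2)) : Wraps x (i + 1) (i + 3) := by
  have hw' := (h.wraps_iff_succ i (i + 2) (by omega) (by omega) (by omega)).1 hw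
  have := h.zigzag hup hi (by omega)
  have := h.zigzag hup (i := i + 1) (by omega) (by omega)
  simp only [wraps_iff, Nat.add_assoc, Nat.reduceAdd] at *
  omega

theorem IsFold.wraps_of_le {i m : ℕ} (h : IsFold up n x) (hup : AlternatesOn up c n)
    (hi : c ≤ i) (hw : Wraps x i (i + 2)) (him : i ≤ m) (hn : m + 2 < n) :
    Wraps x m (m + 2) := by
  induction m, him using Nat.le_induction with
  | base => exact hw
  | succ m him ih => exact h.wraps_succ_of_wraps hup (hi.trans him) hn (ih (by omega))

theorem IsFold.mem_uIcc_of_wraps {i m : ℕ} (h : IsFold up n x) (hup : AlternatesOn up c n)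
    (hi : c ≤ i) (hw : Wraps x i (i + 2)) (him : i + 2 ≤ m) (hn : m < n) :
    x m ∈ Set.uIcc (x (i + 1)) (x (i + 2)) := by
  suffices ∀ m, i ≤ m → m + 2 < n →
      Set.uIcc (x (m + 1)) (x (m + 2)) ⊆ Set.uIcc (x (i + 1)) (x (i + 2)) by
    obtain ⟨m, rfl⟩ : ∃ k, m = k + 2 := ⟨m - 2, by omega⟩
    exact this m (by omega) hn Set.right_mem_uIcc
  intro m him
  induction m, him using Nat.le_induction with
  | base => exact fun _ => subset_rfl
  | succ m him ih =>
    intro hn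
    have hw' : Wraps x (m + 1) (m + 3) := h.wraps_of_le hup hi hw (by omega) hn
    exact (Set.uIcc_subset_uIcc Set.right_mem_uIcc (Set.uIoo_subset_uIcc_self hw')).trans
      (ih (by omega))

end AlternatesOn

/-- The first crease `t ≥ c` after which the strip turns inwards, that is, which wraps around face
`t + 2`; it is `n - 2` if the strip spirals outwards to its last face `n - 1`. -/
noncomputable def turn (c n : ℕ) (x : ℕ → ℤ) : ℕ :=
  sInf {i | c ≤ i ∧ (n ≤ i + 2 ∨ Wraps x i (i + 2))}

section Turn

variable {up : ℕ → Prop} {c n : ℕ} {x y : ℕ → ℤ}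

theorem turn_mem (c n : ℕ) (x : ℕ → ℤ) :
    c ≤ turn c n x ∧ (n ≤ turn c n x + 2 ∨ Wraps x (turn c n x) (turn c n x + 2)) :=
  Nat.sInf_mem (s := {i | c ≤ i ∧ (n ≤ i + 2 ∨ Wraps x i (i + 2))})
    ⟨c + n, by omega, Or.inl (by omega)⟩

theorem turn_le {i : ℕ} (hi : c ≤ i) (h : n ≤ i + 2 ∨ Wraps x i (i + 2)) : turn c n x ≤ i :=
  Nat.sInf_le ⟨hi, h⟩

theorem le_turn : c ≤ turn c n x := (turn_mem c n x).1

theorem turn_add_two_le (hn : c + 2 ≤ n) : turn c n x + 2 ≤ n := by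
  have : turn c n x ≤ n - 2 := turn_le (by omega) (Or.inl (by omega))
  omega

theorem wraps_turn (hn : turn c n x + 2 < n) : Wraps x (turn c n x) (turn c n x + 2) :=
  (turn_mem c n x).2.resolve_left (by omega)

theorem not_wraps_of_lt_turn {i : ℕ} (hi : c ≤ i) (h : i < turn c n x) : ¬ Wraps x i (i + 2) :=
  fun hw => h.not_ge (turn_le hi (Or.inr hw))

theorem turn_neg : turn c n (-x) = turn c n x := by
  simp only [turn, wraps_neg]

theorem turn_add_two_eq {p : ℕ} (hp : c ≤ p) (h : p ≤ turn c n x) : turn c (p + 2) x = p := by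
  refine (turn_le hp (Or.inl le_rfl)).antisymm (not_lt.1 fun hlt => ?_)
  exact not_wraps_of_lt_turn le_turn (hlt.trans_le h) (wraps_turn (by omega))

theorem IsFold.wraps_of_lt_turn {i : ℕ} (h : IsFold up n x) (hup : AlternatesOn up c n)
    (hn : c + 2 ≤ n) (hi : c ≤ i) (hit : i < turn c n x) : Wraps x (i + 1) i := by
  have : turn c n x + 2 ≤ n := turn_add_two_le hn
  exact (h.wraps_or_wraps hup hi (by omega)).resolve_left (not_wraps_of_lt_turn hi hit)

theorem IsFold.mem_uIcc_of_le_turn {i m : ℕ} (h : IsFold up n x) (hup : AlternatesOn up c n)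
    (hn : c + 2 ≤ n) (hi : c ≤ i) (him : i ≤ m + 1) (hm : c ≤ m) (hmt : m ≤ turn c n x) :
    x i ∈ Set.uIcc (x m) (x (m + 1)) := by
  induction m, hm using Nat.le_induction with
  | base =>
    rcases (show i = c ∨ i = c + 1 by omega) with rfl | rfl
    · exact Set.left_mem_uIcc
    · exact Set.right_mem_uIcc
  | succ m hm ih =>
    have hw : Wraps x (m + 1) m := h.wraps_of_lt_turn hup hn hm hmt
    rcases him.eq_or_lt with rfl | him
    · exact Set.right_mem_uIcc
    · exact Set.uIcc_subset_uIcc (Set.uIoo_subset_uIcc_self hw) Set.left_mem_uIcc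
        (ih (by omega) (by omega))

theorem IsFold.lt_succ_iff_of_le_turn {i m : ℕ} (h : IsFold up n x) (hup : AlternatesOn up c n)
    (hn : c + 2 ≤ n) (hi : c ≤ i) (him : i ≤ m) (hmt : m ≤ turn c n x) :
    x i < x (m + 1) ↔ up m := by
  have : turn c n x + 2 ≤ n := turn_add_two_le hn
  have hmem := h.mem_uIcc_of_le_turn hup hn hi (by omega) (hi.trans him) hmt
  have := h.ne (i := i) (j := m + 1) (by omega) (by omega) (by omega)
  rw [Set.mem_uIcc] at hmem
  rw [← h.lt_succ_iff m (by omega)]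
  omega

theorem IsFold.not_wraps_succ_turn {i : ℕ} (h : IsFold up n x) (hup : AlternatesOn up c n)
    (hn : turn c n x + 2 < n) (hi : c ≤ i) (hit : i ≤ turn c n x) :
    ¬ Wraps x (turn c n x + 1) i := by
  have hw := wraps_turn hn
  rcases hit.eq_or_lt with rfl | hit
  · simp only [wraps_iff, Nat.add_assoc, Nat.reduceAdd] at *
    omega
  · -- Crease `q`, the last before the turn, bounds the spiral; crease `q + 2` cannot enter it.
    obtain ⟨q, hq⟩ : ∃ q, turn c n x = q + 1 := ⟨turn c n x - 1, by omega⟩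
    have hout := h.wraps_of_lt_turn hup (by omega) (show c ≤ q by omega) (by omega)
    have hmem := h.mem_uIcc_of_le_turn hup (by omega) hi (by omega) (show c ≤ q by omega) (by omega)
    have hcross := h.wraps_iff_succ q (q + 2) (by omega) (by omega) (by omega)
    rw [hq] at hw ⊢
    rw [Set.mem_uIcc] at hmem
    simp only [wraps_iff, Nat.add_assoc, Nat.reduceAdd] at *
    have := h.ne (i := q) (j := q + 3) (by omega) (by omega) (by omega)
    omega

theorem IsFold.not_wraps_of_turn_le {i m : ℕ} (h : IsFold up n x) (hup : AlternatesOn up c n)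
    (hi : c ≤ i) (him : i ≤ m) (hmt : turn c n x ≤ m) (hn : m + 2 < n) :
    ¬ Wraps x (m + 1) i := by
  induction m, hmt using Nat.le_induction with
  | base => exact h.not_wraps_succ_turn hup hn hi him
  | succ m hmt ih =>
    have hw : Wraps x (m + 1) (m + 3) :=
      h.wraps_of_le hup le_turn (wraps_turn (n := n) (by omega)) (by omega) hn
    rcases him.eq_or_lt with rfl | him
    · simp only [wraps_iff, Nat.add_assoc, Nat.reduceAdd] at *
      omega
    · have := ih (by omega) (by omega)
      simp only [wraps_iff, Nat.add_assoc, Nat.reduceAdd] at *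
      omega

theorem IsFold.lt_succ_iff_lt_of_turn_lt {i m : ℕ} (h : IsFold up n x)
    (hup : AlternatesOn up c n) (hi : c ≤ i) (him : i < m) (hmt : turn c n x < m)
    (hn : m + 1 < n) : x i < x (m + 1) ↔ x i < x m := by
  obtain ⟨m, rfl⟩ : ∃ k, m = k + 1 := ⟨m - 1, by omega⟩
  have hw := h.not_wraps_of_turn_le hup hi (by omega) (show turn c n x ≤ m by omega) hn
  have := h.ne (i := i) (j := m + 1) (by omega) (by omega) (by omega)
  have := h.ne (i := i) (j := m + 1 + 1) (by omega) (by omega) (by omega)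
  rw [wraps_iff] at hw
  omega

theorem IsFold.last_mem_uIcc_succ_turn (h : IsFold up n x) (hup : AlternatesOn up c n)
    (hn : turn c n x + 2 < n) :
    x (n - 1) ∈ Set.uIcc (x (turn c n x + 1)) (x (turn c n x + 2)) :=
  h.mem_uIcc_of_wraps hup le_turn (wraps_turn hn) (by omega) (by omega)

theorem IsFold.last_mem_uIcc (h : IsFold up n x) (hup : AlternatesOn up c n) (hn : c + 2 ≤ n) :
    x (n - 1) ∈ Set.uIcc (x (turn c n x)) (x (turn c n x + 1)) := by
  rcases (turn_add_two_le (x := x) hn).eq_or_lt with heq | hlt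
  · rw [show n - 1 = turn c n x + 1 by omega]
    exact Set.right_mem_uIcc
  · exact Set.uIcc_subset_uIcc Set.right_mem_uIcc (Set.uIoo_subset_uIcc_self (wraps_turn hlt))
      (h.last_mem_uIcc_succ_turn hup hlt)

theorem IsFold.lt_last_iff {i : ℕ} (h : IsFold up n x) (hup : AlternatesOn up c n)
    (hn : c + 2 ≤ n) (hi : c ≤ i) (hit : i ≤ turn c n x) :
    x i < x (n - 1) ↔ up (turn c n x) := by
  rw [← h.lt_succ_iff_of_le_turn hup hn hi hit le_rfl]
  rcases (turn_add_two_le (x := x) hn).eq_or_lt with heq | hlt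
  · rw [show n - 1 = turn c n x + 1 by omega]
  · have hmem := h.last_mem_uIcc_succ_turn hup hlt
    have hw := h.not_wraps_succ_turn hup hlt hi hit
    have := h.ne (i := i) (j := n - 1) (by omega) (by omega) (by omega)
    have := h.ne (i := i) (j := turn c n x + 1) (by omega) (by omega) (by omega)
    rw [Set.mem_uIcc] at hmem
    simp only [wraps_iff, Nat.add_assoc, Nat.reduceAdd] at hw
    omega

-- Up to the turn each new face lies beyond all earlier ones; after it, beside its predecessor.
theorem sameOrder_of_turn_eq (hx : IsFold up n x) (hy : IsFold up n y)
    (hup : AlternatesOn up c n) (ht : turn c n x = turn c n y) : SameOrder c n x y := by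
  refine sameOrder_of_forall_lt hx hy fun i j hi hij => ?_
  induction j, (show i + 1 ≤ j from hij) using Nat.le_induction with
  | base =>
    intro hn
    rw [hx.lt_succ_iff i hn, hy.lt_succ_iff i hn]
  | succ m him ih =>
    intro hn
    rcases le_or_gt m (turn c n x) with hmt | hmt
    · rw [hx.lt_succ_iff_of_le_turn hup (by omega) hi (by omega) hmt,
        hy.lt_succ_iff_of_le_turn hup (by omega) hi (by omega) (ht ▸ hmt)]
    · rw [hx.lt_succ_iff_lt_of_turn_lt hup hi him hmt hn,
        hy.lt_succ_iff_lt_of_turn_lt hup hi him (ht ▸ hmt) hn, ih him (by omega)]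

end Turn

section Determination

variable {up : ℕ → Prop} {c n : ℕ} {x y : ℕ → ℤ}

theorem flips_succ_iff {j k : ℕ} (hx : IsFold up n x) (hy : IsFold up n y)
    (hxy : SameOrder (j + 1) n x y) (hjk : j < k) (hpar : k % 2 = j % 2) (hn : k + 1 < n) :
    x j < x k ∧ y k < y j ↔ x j < x (k + 1) ∧ y (k + 1) < y j := by
  have hcx := hx.wraps_iff_succ j k (by omega) hn hpar.symm
  have hcy := hy.wraps_iff_succ j k (by omega) hn hpar.symm
  have hdir : x j < x (j + 1) ↔ y j < y (j + 1) := by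
    rw [hx.lt_succ_iff j (by omega), hy.lt_succ_iff j (by omega)]
  have h₁ := hxy (j + 1) k le_rfl (by omega) (by omega) (by omega)
  have h₂ := hxy k (j + 1) (by omega) (by omega) le_rfl (by omega)
  have h₃ := hxy (j + 1) (k + 1) le_rfl (by omega) (by omega) hn
  have h₄ := hxy (k + 1) (j + 1) (by omega) hn le_rfl (by omega)
  have := hx.ne (i := j) (j := k) (by omega) (by omega) (by omega)
  have := hy.ne (i := j) (j := k) (by omega) (by omega) (by omega)
  have := hx.ne (i := j) (j := k + 1) (by omega) (by omega) (by omega)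
  have := hy.ne (i := j) (j := k + 1) (by omega) (by omega) (by omega)
  have := hx.ne (i := j) (j := j + 1) (by omega) (by omega) (by omega)
  rw [wraps_iff, wraps_iff] at hcx hcy
  omega

/- The first flip against face `j` would occur at some face `p + 1` and be shared by face `p + 2`,
with face `p` on the unflipped side; in one of the two folds the strip then turns inwards at `p`,
hence in both, and its last face is caught between faces `p + 1` and `p + 2`. -/
theorem not_flips {i j : ℕ} (hx : IsFold up n x) (hy : IsFold up n y)
    (hup : AlternatesOn up c n) (hjc : j < c) (hxy : SameOrder (j + 1) n x y)
    (hc : x j < x c ↔ y j < y c) (hlast : x j < x (n - 1) ↔ y j < y (n - 1))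
    (hi : c ≤ i) (hn : i < n) : ¬ (x j < x i ∧ y i < y j) := by
  induction i, hi using Nat.le_induction with
  | base => omega
  | succ p hp ih =>
    have ih := ih (by omega)
    rintro ⟨hxp, hyp⟩
    have hpn : p + 2 < n := by
      by_contra h
      rw [show n - 1 = p + 1 by omega] at hlast
      omega
    have hpar : (p + 1) % 2 = j % 2 := by
      by_contra h
      exact ih ((flips_succ_iff hx hy hxy (by omega) (by omega) hn).2 ⟨hxp, hyp⟩)
    obtain ⟨hxp₂, hyp₂⟩ : x j < x (p + 2) ∧ y (p + 2) < y j :=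
      (flips_succ_iff hx hy hxy (by omega) hpar hpn).1 ⟨hxp, hyp⟩
    have hw : Wraps x p (p + 2) ∧ Wraps y p (p + 2) := by
      have := hx.zigzag hup hp hpn
      have := hy.zigzag hup hp hpn
      have := hxy p (p + 1) (by omega) (by omega) (by omega) hn
      have := hxy p (p + 2) (by omega) (by omega) (by omega) hpn
      have := hxy (p + 2) p (by omega) hpn (by omega) (by omega)
      have := hx.ne (i := p) (j := j) (by omega) (by omega) (by omega)
      have := hy.ne (i := p) (j := j) (by omega) (by omega) (by omega)
      rw [wraps_iff, wraps_iff]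
      omega
    rcases (show p + 2 ≤ n - 1 by omega).eq_or_lt with heq | hlt
    · rw [← heq] at hlast
      omega
    · have hmx := hx.mem_uIcc_of_wraps hup hp hw.1 hlt.le (by omega)
      have hmy := hy.mem_uIcc_of_wraps hup hp hw.2 hlt.le (by omega)
      rw [Set.mem_uIcc] at hmx hmy
      omega

theorem sameOrder_pred {j : ℕ} (hx : IsFold up n x) (hy : IsFold up n y)
    (hup : AlternatesOn up c n) (hjc : j < c) (hxy : SameOrder (j + 1) n x y)
    (hold : SameOrder j (c + 1) x y) (hlast : x j < x (n - 1) ↔ y j < y (n - 1)) :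
    SameOrder j n x y := by
  refine sameOrder_of_forall_lt hx hy fun i k hi hik hk => ?_
  rcases hi.eq_or_lt with rfl | hi
  · rcases le_or_gt c k with hck | hck
    · have hne : ∀ l, j < l → l < n → x j ≠ x l ∧ y j ≠ y l := fun l hl hln =>
        ⟨hx.ne (by omega) hln hl.ne, hy.ne (by omega) hln hl.ne⟩
      have := hne k hik hk
      have hc := hold j c le_rfl (by omega) hjc.le (by omega)
      have hxy' := not_flips hx hy hup hjc hxy hc hlast hck hk
      have hyx' := not_flips hy hx hup hjc hxy.symm hc.symm hlast.symm hck hk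
      omega
    · exact hold j k le_rfl (by omega) hik.le (by omega)
  · exact hxy i k hi (hik.trans hk) (by omega) hk

theorem sameOrder_of_turn_eq_of_last {s : ℕ} (hx : IsFold up n x) (hy : IsFold up n y)
    (hup : AlternatesOn up c n) (hs : s ≤ c) (ht : turn c n x = turn c n y)
    (hold : SameOrder s (c + 1) x y)
    (hlast : ∀ j, s ≤ j → j < c → (x j < x (n - 1) ↔ y j < y (n - 1))) : SameOrder s n x y := by
  induction hs using Nat.decreasingInduction with
  | of_succ j hj ih =>
    exact sameOrder_pred hx hy hup hj
      (ih (hold.mono j.le_succ le_rfl) fun k hk => hlast k (j.le_succ.trans hk)) hold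
      (hlast j le_rfl hj)
  | self => exact sameOrder_of_turn_eq hx hy hup ht

end Determination

section Closeness

variable {up : ℕ → Prop} {c n : ℕ} {x y : ℕ → ℤ}

/- The creases `t` and `t + 1` block the way down: a fold coming down through earlier faces below
face `t` cannot have got past face `t + 1`. -/
theorem IsFold.succ_lt_of_forall_lt {a b i t : ℕ} (h : IsFold up n x) (hbt : b < t)
    (hn : t + 2 < n) (hb : x (t + 1) < x b) (ht : x t < x (t + 2))
    (hlt : ∀ i, a ≤ i → i ≤ b → x i < x t) (hai : a ≤ i) (hib : i ≤ b) : x (t + 1) < x i := by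
  induction hib using Nat.decreasingInduction with
  | of_succ i hib ih =>
    have ih := ih (by omega)
    have hi := hlt i (by omega) (by omega)
    have hi' := hlt (i + 1) (by omega) (by omega)
    rcases Nat.mod_two_eq_zero_or_one (t + i) with hpar | hpar
    · have := h.wraps_iff_succ t i (by omega) (by omega) (by omega)
      rw [wraps_iff, wraps_iff] at this
      omega
    · have := h.wraps_iff_succ (t + 1) i (by omega) (by omega) (by omega)
      simp only [wraps_iff, Nat.add_assoc, Nat.reduceAdd] at this
      omega
  | self => exact hb

theorem IsFold.exists_exit {t : ℕ} (h : IsFold up n x) (hct : c < t) (hn : t + 2 < n)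
    (hc : x (t + 1) < x c ∧ x c < x t) (ht : x t < x (t + 2)) (hex : ∃ i ≤ c, x t < x i) :
    ∃ j < c, j % 2 ≠ t % 2 ∧ x t < x j ∧ x j < x (t + 2) ∧ ∀ i, j < i → i ≤ c → x i < x t := by
  obtain ⟨i, hic, hi⟩ := hex
  set j := Nat.findGreatest (fun i => x t < x i) c
  have hxj : x t < x j := Nat.findGreatest_spec (P := fun i => x t < x i) hic hi
  have hjc : j < c := lt_of_le_of_ne (Nat.findGreatest_le c) fun h => by rw [h] at hxj; omega
  have hlt : ∀ i, j < i → i ≤ c → x i < x t := fun i hji hic =>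
    lt_of_le_of_ne (not_lt.1 (Nat.findGreatest_is_greatest hji hic))
      (h.ne (by omega) (by omega) (by omega))
  have hj' : x (t + 1) < x (j + 1) :=
    h.succ_lt_of_forall_lt hct hn hc.1 ht hlt le_rfl hjc
  have hj'' := hlt (j + 1) (by omega) hjc
  have hpar : j % 2 ≠ t % 2 := fun hpar => by
    have := h.wraps_iff_succ t j (by omega) (by omega) hpar.symm
    rw [wraps_iff, wraps_iff] at this
    omega
  refine ⟨j, hjc, hpar, hxj, ?_, hlt⟩
  have := h.wraps_iff_succ (t + 1) j (by omega) (by omega) (by omega)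
  simp only [wraps_iff, Nat.add_assoc, Nat.reduceAdd] at this
  omega

theorem lt_succ_of_lt_succ {j p : ℕ} (hx : IsFold up n x) (hy : IsFold up n y)
    (hup : AlternatesOn up c n) (hold : SameOrder 0 (c + 1) x y) (hp : c ≤ p) (hn : p + 2 ≤ n)
    (hpx : p ≤ turn c n x) (hpy : p ≤ turn c n y) (hupp : up p) (hjc : j < c)
    (hpar : p % 2 = j % 2) (hjx : ∀ i, j < i → i ≤ c → x i < x (p + 1))
    (hjy : ∀ i, j < i → i ≤ c → y i < y (p + 1)) (hj : x j < x (p + 1)) : y j < y (p + 1) := by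
  have hxy : SameOrder (j + 1) (p + 2) x y :=
    sameOrder_of_turn_eq_of_last (hx.mono hn) (hy.mono hn) (hup.mono hn) hjc
      (by rw [turn_add_two_eq hp hpx, turn_add_two_eq hp hpy])
      (hold.mono zero_le le_rfl)
      fun i hi hic => iff_of_true (hjx i hi hic.le) (hjy i hi hic.le)
  by_contra hyj
  have := hy.ne (i := j) (j := p + 1) (by omega) (by omega) (by omega)
  have hyw := hy.wraps_iff_succ p j (by omega) (by omega) hpar
  have hxw := hx.wraps_iff_succ p j (by omega) (by omega) hpar
  have hxp := (hx.lt_succ_iff p (by omega)).2 hupp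
  have hyp := (hy.lt_succ_iff p (by omega)).2 hupp
  have hj₁ : y (j + 1) < y (p + 1) := hjy (j + 1) (by omega) hjc
  have hyc : y c < y (p + 1) := hjy c hjc le_rfl
  have hcj : x c < x j := (hold c j zero_le (by omega) zero_le (by omega)).2 (by omega)
  have hpc := hx.mem_uIcc_of_le_turn hup (by omega) le_rfl (by omega) hp hpx
  have hj₁p := hxy (j + 1) p le_rfl (by omega) (by omega) (by omega)
  have := hy.ne (i := j + 1) (j := p) (by omega) (by omega) (by omega)
  rw [wraps_iff, wraps_iff] at hyw hxw
  rw [Set.mem_uIcc] at hpc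
  omega

theorem IsFold.spiral_lt {p : ℕ} (h : IsFold up n x) (hup : AlternatesOn up c n)
    (hn : c + 2 ≤ n) (hp : c ≤ p) (hpt : p + 2 ≤ turn c n x) (hupp : up p) :
    x (p + 2) < x c ∧ x c < x (p + 1) ∧ x (p + 1) < x (p + 3) := by
  have htn : turn c n x + 2 ≤ n := turn_add_two_le hn
  refine ⟨?_, (h.lt_succ_iff_of_le_turn hup hn le_rfl hp (by omega)).2 hupp,
    (h.lt_succ_iff_of_le_turn hup hn (m := p + 2) (by omega) (by omega) hpt).2
      ((hup.add_two_iff hp (by omega)).2 hupp)⟩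
  have hdown : ¬ up (p + 1) := fun h => (hup.succ_iff hp (by omega)).1 h hupp
  rw [← h.lt_succ_iff_of_le_turn hup hn le_rfl (by omega) (by omega)] at hdown
  exact lt_of_le_of_ne (not_lt.1 hdown) (h.ne (by omega) (by omega) (by omega))

theorem turn_le_turn_add_two_of_lt (hx : IsFold up n x) (hy : IsFold up n y)
    (hup : AlternatesOn up c n) (hn : c + 2 ≤ n) (hold : SameOrder 0 (c + 1) x y)
    (hlast : ∀ i ≤ c, (x i < x (n - 1) ↔ y i < y (n - 1))) (hc : x c < x (n - 1))
    (hex : ∃ i ≤ c, x (n - 1) < x i) : turn c n y ≤ turn c n x + 2 := by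
  by_contra! hlt
  obtain ⟨i, hic, hi⟩ := hex
  set p := turn c n x
  have hcp : c ≤ p := le_turn
  have htn : turn c n y + 2 ≤ n := turn_add_two_le hn
  have hupp : up p := (hx.lt_last_iff hup hn le_rfl hcp).1 hc
  have hupq : up (turn c n y) :=
    (hy.lt_last_iff hup hn le_rfl le_turn).1 ((hlast c le_rfl).1 hc)
  have hylast : ∀ i, c ≤ i → i ≤ turn c n y → y i < y (n - 1) := fun i hi hit =>
    (hy.lt_last_iff hup hn hi hit).2 hupq
  have hxlast : x (n - 1) ≤ x (p + 1) := by
    have : x (n - 1) ∈ Set.uIcc (x p) (x (p + 1)) := hx.last_mem_uIcc hup hn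
    have := (hx.lt_succ_iff p (by omega)).2 hupp
    rw [Set.mem_uIcc] at *
    omega
  have hyi : y (n - 1) < y i := by
    have := hlast i hic
    have := hy.ne (i := i) (j := n - 1) (by omega) (by omega) (by omega)
    omega
  have hp₁ : y (p + 1) < y (n - 1) := hylast (p + 1) (by omega) (by omega)
  have hp₃ : y (p + 3) < y (n - 1) := hylast (p + 3) (by omega) (by omega)
  obtain ⟨hp₂c, hcp₁, hp₁₃⟩ := hy.spiral_lt hup hn hcp hlt.le hupp
  obtain ⟨j, hjc, hpar, hj, hj₃, hjy⟩ := hy.exists_exit (t := p + 1) (by omega)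
    (by omega) ⟨hp₂c, hcp₁⟩ hp₁₃ ⟨i, hic, by omega⟩
  have hx_lt : ∀ i ≤ c, y i < y (n - 1) → x i < x (p + 1) := fun i hi h =>
    ((hlast i hi).2 h).trans_le hxlast
  have := lt_succ_of_lt_succ hx hy hup hold hcp (by omega) le_rfl (by omega) hupp hjc (by omega)
    (fun i hji hic => hx_lt i hic ((hjy i hji hic).trans hp₁)) hjy
    (hx_lt j hjc.le (hj₃.trans hp₃))
  omega

theorem turn_le_turn_add_two (hx : IsFold up n x) (hy : IsFold up n y)
    (hup : AlternatesOn up c n) (hn : c + 2 ≤ n) (hold : SameOrder 0 (c + 1) x y)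
    (hlast : ∀ i ≤ c, (x i < x (n - 1) ↔ y i < y (n - 1))) (hbelow : ∃ i ≤ c, x i < x (n - 1))
    (habove : ∃ i ≤ c, x (n - 1) < x i) : turn c n y ≤ turn c n x + 2 := by
  have hne : ∀ i ≤ c, x i ≠ x (n - 1) ∧ y i ≠ y (n - 1) := fun i hi =>
    ⟨hx.ne (by omega) (by omega) (by omega), hy.ne (by omega) (by omega) (by omega)⟩
  rcases lt_or_gt_of_ne (hne c le_rfl).1 with h | h
  · exact turn_le_turn_add_two_of_lt hx hy hup hn hold hlast h habove
  · rw [← turn_neg (x := x), ← turn_neg (x := y)]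
    refine turn_le_turn_add_two_of_lt hx.neg hy.neg hup.not hn hold.neg (fun i hi => ?_)
      (neg_lt_neg h) (hbelow.imp fun i hi => ⟨hi.1, neg_lt_neg hi.2⟩)
    have := hne i hi
    have := hlast i hi
    simp only [Pi.neg_apply, neg_lt_neg_iff]
    omega

theorem turn_mod_two_eq (hx : IsFold up n x) (hy : IsFold up n y) (hup : AlternatesOn up c n)
    (hn : c + 2 ≤ n) (hlast : x c < x (n - 1) ↔ y c < y (n - 1)) :
    turn c n x % 2 = turn c n y % 2 := by
  have htx : turn c n x + 2 ≤ n := turn_add_two_le hn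
  have hty : turn c n y + 2 ≤ n := turn_add_two_le hn
  rw [← hup _ _ le_turn htx le_turn hty, ← hx.lt_last_iff hup hn le_rfl le_turn,
    ← hy.lt_last_iff hup hn le_rfl le_turn, hlast]

end Closeness

section LayerOrdering

variable {n : ℕ} {x y : ℕ → ℤ}

/-- The heights at which the layer ordering `σ` places the faces. -/
def height (σ : Equiv.Perm (Fin n)) (i : ℕ) : ℤ := faceVal σ i

theorem height_lt_iff {σ : Equiv.Perm (Fin n)} {i j : ℕ} (hi : i < n) (hj : j < n) :
    height σ i < height σ j ↔ σ ⟨i, hi⟩ < σ ⟨j, hj⟩ := by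
  simp only [height, faceVal, hi, hj, dite_true, Nat.cast_lt, Fin.val_fin_lt]

theorem height_injOn (σ : Equiv.Perm (Fin n)) : Set.InjOn (height σ) (Set.Iio n) := by
  intro i hi j hj hij
  rw [Set.mem_Iio] at hi hj
  simp only [height, faceVal, hi, hj, dite_true, Nat.cast_inj] at hij
  exact Fin.mk.inj_iff.1 (σ.injective (Fin.ext hij))

theorem eq_of_sameOrder {σ τ : Equiv.Perm (Fin n)}
    (h : SameOrder 0 n (height σ) (height τ)) : σ = τ := by
  have hmono : StrictMono (τ ∘ σ.symm) := fun a b hab => by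
    have := h (σ.symm a) (σ.symm b) zero_le (Fin.is_lt _) zero_le (Fin.is_lt _)
    rw [height_lt_iff (Fin.is_lt _) (Fin.is_lt _),
      height_lt_iff (Fin.is_lt _) (Fin.is_lt _)] at this
    simpa using this.1 (by simpa using hab)
  have hid : τ ∘ σ.symm = id := (hmono.range_inj strictMono_id).1 (by
    rw [(τ.surjective.comp σ.symm.surjective).range_eq, Set.range_id])
  ext1 i
  simpa using (congrFun hid (σ i)).symm

/-- The layer ordering in which the faces `0, …, n - 1` are ordered as their heights `x`. -/
def standardize (n : ℕ) (x : ℕ → ℤ) : Equiv.Perm (Fin n) := (Tuple.sort fun i : Fin n => x i)⁻¹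

theorem sameOrder_standardize (hx : Set.InjOn x (Set.Iio n)) :
    SameOrder 0 n (height (standardize n x)) x := by
  intro i j _ hi _ hj
  set f : Fin n → ℤ := fun i => x i with hf
  have hinj : Function.Injective f := fun a b hab => Fin.ext (hx a.2 b.2 hab)
  have hmono : StrictMono (f ∘ Tuple.sort f) :=
    (Tuple.monotone_sort f).strictMono_of_injective (hinj.comp (Tuple.sort f).injective)
  rw [height_lt_iff hi hj, ← hmono.lt_iff_lt]
  simp [standardize, hf]

theorem standardize_eq_iff {τ : Equiv.Perm (Fin n)} (hx : Set.InjOn x (Set.Iio n)) :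
    standardize n x = τ ↔ SameOrder 0 n x (height τ) :=
  ⟨fun h => h ▸ (sameOrder_standardize hx).symm,
    fun h => eq_of_sameOrder ((sameOrder_standardize hx).trans h)⟩

/-- Crease `i` of the mountain-valley assignment `μ` takes the strip upwards: this combines the
label `μ i` with the side of the paper, i.e. the parity of `i`. -/
def creaseUp (μ : ℕ → MV) (i : ℕ) : Prop :=
  ¬ ((μ i = MV.M ∧ Even i) ∨ (μ i = MV.V ∧ Odd i))

theorem mvRelations_iff {μ : ℕ → MV} {σ : Equiv.Perm (Fin n)} :
    MVRelations n μ σ ↔ ∀ i, i + 1 < n → (height σ i < height σ (i + 1) ↔ creaseUp μ i) := by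
  refine forall₂_congr fun i hi => ?_
  have hne := (height_injOn σ).ne (x := i) (y := i + 1) (i.lt_succ_self.trans hi) hi (by omega)
  simp only [height] at hne ⊢
  split_ifs with h
  · simp only [creaseUp, h, not_true, iff_false]
    omega
  · simp only [creaseUp, h, not_false_iff, iff_true]
    omega

theorem noCrossings_iff {σ : Equiv.Perm (Fin n)} :
    NoCrossings n σ ↔ ∀ i j, i + 1 < n → j + 1 < n → i % 2 = j % 2 →
      (Wraps (height σ) i j ↔ Wraps (height σ) i (j + 1)) := by
  have hwraps : ∀ i j,
      StrictlyBetween (faceVal σ j) (faceVal σ i) (faceVal σ (i + 1)) ↔ Wraps (height σ) i j := by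
    intro i j
    rw [wraps_iff]
    simp only [StrictlyBetween, height]
    omega
  simp only [NoCrossings, hwraps]
  exact forall₂_congr fun i j => forall₃_congr fun _ _ _ => not_xor _ _

theorem validLayerOrdering_iff {μ : ℕ → MV} {σ : Equiv.Perm (Fin n)} :
    ValidLayerOrdering n μ σ ↔ IsFold (creaseUp μ) n (height σ) := by
  rw [ValidLayerOrdering, mvRelations_iff, noCrossings_iff]
  exact ⟨fun h => ⟨height_injOn σ, h.1, h.2⟩, fun h => ⟨h.lt_succ_iff, h.wraps_iff_succ⟩⟩

end LayerOrdering

section Foldings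

variable {up : ℕ → Prop} {k n : ℕ} {x : ℕ → ℤ}

open Classical in
/-- The layer orderings of `n` faces with prescribed crease directions `up`. -/
noncomputable def foldings (up : ℕ → Prop) (n : ℕ) : Finset (Equiv.Perm (Fin n)) :=
  {σ | IsFold up n (height σ)}

open Classical in
/-- The foldings of `n` faces that extend the layer ordering `τ` of the first `k` faces. -/
noncomputable def extensions (up : ℕ → Prop) (n : ℕ) (τ : Equiv.Perm (Fin k)) :
    Finset (Equiv.Perm (Fin n)) :=
  {σ | IsFold up n (height σ) ∧ SameOrder 0 k (height σ) (height τ)}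

theorem mem_foldings {σ : Equiv.Perm (Fin n)} : σ ∈ foldings up n ↔ IsFold up n (height σ) := by
  simp only [foldings, Finset.mem_filter_univ]

theorem mem_extensions {τ : Equiv.Perm (Fin k)} {σ : Equiv.Perm (Fin n)} :
    σ ∈ extensions up n τ ↔ IsFold up n (height σ) ∧ SameOrder 0 k (height σ) (height τ) := by
  simp only [extensions, Finset.mem_filter_univ]

theorem foldCount_eq_card_foldings (n : ℕ) (μ : ℕ → MV) :
    foldCount n μ = (foldings (creaseUp μ) n).card := by
  simp only [foldCount, validLayerOrdering_iff, ← mem_foldings, Nat.card_eq_fintype_card,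
    Fintype.card_coe]

theorem card_foldings_one (up : ℕ → Prop) : (foldings up 1).card = 1 := by
  have : foldings up 1 = Finset.univ := Finset.eq_univ_of_forall fun σ => mem_foldings.2
    ⟨height_injOn σ, fun i hi => by omega, fun i j hi => by omega⟩
  rw [this, Finset.card_univ, Fintype.card_unique]

theorem standardize_mem_extensions {τ : Equiv.Perm (Fin k)} (hkn : k ≤ n) (hx : IsFold up n x)
    (h : SameOrder 0 k x (height τ)) : standardize n x ∈ extensions up n τ :=
  have hstd := sameOrder_standardize hx.injOn
  mem_extensions.2 ⟨hstd.isFold hx, (hstd.mono le_rfl hkn).trans h⟩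

theorem card_foldings_eq_sum (up : ℕ → Prop) (hkn : k ≤ n) :
    (foldings up n).card = ∑ τ ∈ foldings up k, (extensions up n τ).card := by
  have hmaps : Set.MapsTo (fun σ : Equiv.Perm (Fin n) => standardize k (height σ))
      (foldings up n) (foldings up k) := fun σ hσ => by
    have hσ := (mem_foldings.1 hσ).mono hkn
    exact mem_foldings.2 ((sameOrder_standardize hσ.injOn).isFold hσ)
  rw [Finset.card_eq_sum_card_fiberwise hmaps]
  refine Finset.sum_congr rfl fun τ _ => congrArg Finset.card (Finset.ext fun σ => ?_)
  have hinj : Set.InjOn (height σ) (Set.Iio k) := (height_injOn σ).mono (Set.Iio_subset_Iio hkn)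
  rw [Finset.mem_filter, mem_foldings, mem_extensions, standardize_eq_iff hinj]

end Foldings

/-- The number of the faces `0, …, c` below the last face `n - 1`. -/
def gapIndex (c n : ℕ) (x : ℕ → ℤ) : ℕ :=
  ((Finset.range (c + 1)).filter fun i => x i < x (n - 1)).card

section GapIndex

variable {up : ℕ → Prop} {c n : ℕ} {x y : ℕ → ℤ}

theorem gapIndex_le : gapIndex c n x ≤ c + 1 :=
  (Finset.card_filter_le _ _).trans_eq (Finset.card_range _)

theorem gapIndex_eq_zero_iff : gapIndex c n x = 0 ↔ ∀ i ≤ c, ¬ x i < x (n - 1) := by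
  simp only [gapIndex, Finset.card_eq_zero, Finset.filter_eq_empty_iff, Finset.mem_range,
    Nat.lt_succ_iff]

theorem gapIndex_eq_succ_iff : gapIndex c n x = c + 1 ↔ ∀ i ≤ c, x i < x (n - 1) := by
  have := Finset.card_filter_eq_iff (s := Finset.range (c + 1)) (p := fun i => x i < x (n - 1))
  rw [Finset.card_range] at this
  simp only [gapIndex, this, Finset.mem_range, Nat.lt_succ_iff]

theorem lt_last_of_gapIndex_eq {i : ℕ} (hold : SameOrder 0 (c + 1) x y)
    (hgap : gapIndex c n x = gapIndex c n y) (hi : i ≤ c)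
    (hxi : x i < x (n - 1)) : y i < y (n - 1) := by
  by_contra hyi
  refine hgap.not_gt (Finset.card_lt_card (Finset.ssubset_iff_of_subset ?_ |>.2 ⟨i, ?_, ?_⟩))
  · intro k hk
    rw [Finset.mem_filter, Finset.mem_range] at hk ⊢
    exact ⟨hk.1, ((hold k i zero_le hk.1 zero_le (by omega)).2 (by omega)).trans hxi⟩
  · exact Finset.mem_filter.2 ⟨Finset.mem_range.2 (by omega), hxi⟩
  · exact fun h => hyi (Finset.mem_filter.1 h).2

theorem lt_last_iff_of_gapIndex_eq {i : ℕ} (hold : SameOrder 0 (c + 1) x y)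
    (hgap : gapIndex c n x = gapIndex c n y)
    (hi : i ≤ c) : x i < x (n - 1) ↔ y i < y (n - 1) :=
  ⟨lt_last_of_gapIndex_eq hold hgap hi, lt_last_of_gapIndex_eq hold.symm hgap.symm hi⟩

theorem gapIndex_eq_of_turn_eq (hx : IsFold up n x) (hy : IsFold up n y)
    (hup : AlternatesOn up c n) (hn : c + 2 ≤ n)
    (hgx : gapIndex c n x = 0 ∨ gapIndex c n x = c + 1)
    (hgy : gapIndex c n y = 0 ∨ gapIndex c n y = c + 1) (ht : turn c n x = turn c n y) :
    gapIndex c n x = gapIndex c n y := by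
  have hc : x c < x (n - 1) ↔ y c < y (n - 1) := by
    rw [hx.lt_last_iff hup hn le_rfl le_turn, hy.lt_last_iff hup hn le_rfl le_turn, ht]
  have hx₀ := fun h => (gapIndex_eq_zero_iff (n := n) (x := x)).1 h c le_rfl
  have hx₁ := fun h => (gapIndex_eq_succ_iff (n := n) (x := x)).1 h c le_rfl
  have hy₀ := fun h => (gapIndex_eq_zero_iff (n := n) (x := y)).1 h c le_rfl
  have hy₁ := fun h => (gapIndex_eq_succ_iff (n := n) (x := y)).1 h c le_rfl
  omega

theorem turn_le_turn_add_two_of_gapIndex_eq (hx : IsFold up n x) (hy : IsFold up n y)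
    (hup : AlternatesOn up c n) (hn : c + 2 ≤ n) (hold : SameOrder 0 (c + 1) x y)
    (hgap : gapIndex c n x = gapIndex c n y)
    (hinner : ¬ (gapIndex c n x = 0 ∨ gapIndex c n x = c + 1)) :
    turn c n y ≤ turn c n x + 2 := by
  rw [not_or, gapIndex_eq_zero_iff, gapIndex_eq_succ_iff] at hinner
  push Not at hinner
  obtain ⟨hbelow, i, hi, habove⟩ := hinner
  exact turn_le_turn_add_two hx hy hup hn hold
    (fun i hi => lt_last_iff_of_gapIndex_eq hold hgap hi) hbelow
    ⟨i, hi, lt_of_le_of_ne habove (hx.ne (by omega) (by omega) (by omega))⟩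

end GapIndex

section UpperBound

variable {up : ℕ → Prop} {c n : ℕ} {τ : Equiv.Perm (Fin (c + 1))}

theorem sameOrder_of_mem_extensions {k : ℕ} {τ : Equiv.Perm (Fin k)} {σ σ' : Equiv.Perm (Fin n)}
    (hσ : σ ∈ extensions up n τ) (hσ' : σ' ∈ extensions up n τ) :
    SameOrder 0 k (height σ) (height σ') :=
  (mem_extensions.1 hσ).2.trans (mem_extensions.1 hσ').2.symm

theorem eq_of_gapIndex_eq_of_turn_eq {σ σ' : Equiv.Perm (Fin n)} (hup : AlternatesOn up c n)
    (hσ : σ ∈ extensions up n τ) (hσ' : σ' ∈ extensions up n τ)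
    (hgap : gapIndex c n (height σ) = gapIndex c n (height σ'))
    (ht : turn c n (height σ) = turn c n (height σ')) : σ = σ' := by
  have hf := (mem_extensions.1 hσ).1
  have hf' := (mem_extensions.1 hσ').1
  have hold := sameOrder_of_mem_extensions hσ hσ'
  exact eq_of_sameOrder (sameOrder_of_turn_eq_of_last hf hf' hup zero_le ht hold
    fun j _ hj => lt_last_iff_of_gapIndex_eq hold hgap hj.le)

open Classical in
theorem card_outer_extensions_le (hup : AlternatesOn up c n) (hn : c + 2 ≤ n)
    (τ : Equiv.Perm (Fin (c + 1))) :
    ((extensions up n τ).filter fun σ => gapIndex c n (height σ) = 0 ∨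
      gapIndex c n (height σ) = c + 1).card ≤ n - (c + 1) := by
  rw [show n - (c + 1) = (Finset.Icc c (n - 2)).card by rw [Nat.card_Icc]; omega]
  refine Finset.card_le_card_of_injOn (fun σ => turn c n (height σ)) (fun σ _ => ?_) ?_
  · have : turn c n (height σ) + 2 ≤ n := turn_add_two_le hn
    exact Finset.mem_coe.2 (Finset.mem_Icc.2 ⟨le_turn, Nat.le_sub_of_add_le this⟩)
  · intro σ hσ σ' hσ' ht
    obtain ⟨hσ, hg⟩ := Finset.mem_filter.1 hσ
    obtain ⟨hσ', hg'⟩ := Finset.mem_filter.1 hσ'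
    exact eq_of_gapIndex_eq_of_turn_eq hup hσ hσ' (gapIndex_eq_of_turn_eq
      (mem_extensions.1 hσ).1 (mem_extensions.1 hσ').1 hup hn hg hg' ht) ht

theorem card_inner_fiber_le_two {g : ℕ} (hup : AlternatesOn up c n) (hn : c + 2 ≤ n)
    (τ : Equiv.Perm (Fin (c + 1))) (hg : ¬ (g = 0 ∨ g = c + 1)) :
    ((extensions up n τ).filter fun σ => gapIndex c n (height σ) = g).card ≤ 2 := by
  by_contra! hcard
  obtain ⟨σ₁, h₁, σ₂, h₂, σ₃, h₃, h₁₂, h₁₃, h₂₃⟩ := Finset.two_lt_card.1 hcard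
  have hpair : ∀ σ ∈ (extensions up n τ).filter fun σ => gapIndex c n (height σ) = g,
      ∀ σ' ∈ (extensions up n τ).filter fun σ => gapIndex c n (height σ) = g, σ ≠ σ' →
      turn c n (height σ) ≠ turn c n (height σ') ∧
      turn c n (height σ') ≤ turn c n (height σ) + 2 ∧
      turn c n (height σ) % 2 = turn c n (height σ') % 2 := by
    intro σ hσ σ' hσ' hne
    obtain ⟨hσ, hgσ⟩ := Finset.mem_filter.1 hσ
    obtain ⟨hσ', hgσ'⟩ := Finset.mem_filter.1 hσ'
    have hgap := hgσ.trans hgσ'.symm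
    have hf := (mem_extensions.1 hσ).1
    have hf' := (mem_extensions.1 hσ').1
    have hold := sameOrder_of_mem_extensions hσ hσ'
    exact ⟨fun ht => hne (eq_of_gapIndex_eq_of_turn_eq hup hσ hσ' hgap ht),
      turn_le_turn_add_two_of_gapIndex_eq hf hf' hup hn hold hgap (hgσ ▸ hg),
      turn_mod_two_eq hf hf' hup hn (lt_last_iff_of_gapIndex_eq hold hgap le_rfl)⟩
  have := hpair σ₁ h₁ σ₂ h₂ h₁₂
  have := hpair σ₂ h₂ σ₁ h₁ h₁₂.symm
  have := hpair σ₁ h₁ σ₃ h₃ h₁₃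
  have := hpair σ₃ h₃ σ₁ h₁ h₁₃.symm
  have := hpair σ₂ h₂ σ₃ h₃ h₂₃
  have := hpair σ₃ h₃ σ₂ h₂ h₂₃.symm
  omega

theorem card_inner_extensions_le (hup : AlternatesOn up c n) (hn : c + 2 ≤ n)
    (τ : Equiv.Perm (Fin (c + 1))) :
    ((extensions up n τ).filter fun σ => ¬ (gapIndex c n (height σ) = 0 ∨
      gapIndex c n (height σ) = c + 1)).card ≤ 2 * c := by
  rw [show 2 * c = 2 * (Finset.Ioo 0 (c + 1)).card by rw [Nat.card_Ioo]; rfl]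
  refine Finset.card_le_mul_card_image_of_maps_to
    (t := Finset.Ioo 0 (c + 1)) (f := fun σ => gapIndex c n (height σ)) (fun σ hσ => ?_) 2 ?_
  · have := (Finset.mem_filter.1 hσ).2
    have : gapIndex c n (height σ) ≤ c + 1 := gapIndex_le
    exact Finset.mem_Ioo.2 (by omega)
  · intro g hg
    rw [Finset.mem_Ioo] at hg
    refine (Finset.card_le_card fun σ hσ => ?_).trans
      (card_inner_fiber_le_two hup hn τ (g := g) (by omega))
    rw [Finset.filter_filter, Finset.mem_filter] at hσ
    exact Finset.mem_filter.2 ⟨hσ.1, hσ.2.2⟩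

theorem card_extensions_le (hup : AlternatesOn up c n) (hn : c + 2 ≤ n)
    (τ : Equiv.Perm (Fin (c + 1))) : (extensions up n τ).card ≤ n - (c + 1) + 2 * c := by
  rw [← Finset.card_filter_add_card_filter_not (s := extensions up n τ)
    fun σ => gapIndex c n (height σ) = 0 ∨ gapIndex c n (height σ) = c + 1]
  exact add_le_add (card_outer_extensions_le hup hn τ) (card_inner_extensions_le hup hn τ)

theorem card_foldings_le_mul (hup : AlternatesOn up c n) (hn : c + 2 ≤ n) :
    (foldings up n).card ≤ (foldings up (c + 1)).card * (n - (c + 1) + 2 * c) := by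
  rw [card_foldings_eq_sum up (show c + 1 ≤ n by omega)]
  exact Finset.sum_le_card_nsmul _ _ _ fun τ _ => card_extensions_le hup hn τ

end UpperBound

/-- None of the faces `0, …, n - 1` lies strictly between the faces `i` and `j`. -/
def Adjacent (n : ℕ) (x : ℕ → ℤ) (i j : ℕ) : Prop := ∀ k < n, x k ∉ Set.uIoo (x i) (x j)

section Adjacent

variable {n i j : ℕ} {x y : ℕ → ℤ}

theorem SameOrder.adjacent (h : SameOrder 0 n x y) (hi : i < n) (hj : j < n)
    (hy : Adjacent n y i j) : Adjacent n x i j := by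
  intro k hk hmem
  refine hy k hk ?_
  rwa [mem_uIoo_iff, h i k zero_le hi zero_le hk, h k j zero_le hk zero_le hj,
    h j k zero_le hj zero_le hk, h k i zero_le hk zero_le hi, ← mem_uIoo_iff] at hmem

theorem Adjacent.not_wraps {k : ℕ} (h : Adjacent n x i (i + 1)) (hk : k < n) : ¬ Wraps x i k :=
  h k hk

theorem Adjacent.wraps_iff_wraps {k : ℕ} (h : Adjacent n x i j) (hx : Set.InjOn x (Set.Iio n))
    (hi : i < n) (hj : j < n) (hk : k + 1 < n) (hki : k ≠ i) (hkj : k ≠ j) (hki' : k + 1 ≠ i)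
    (hkj' : k + 1 ≠ j) : Wraps x k i ↔ Wraps x k j := by
  have hk₀ := h k (k.lt_succ_self.trans hk)
  have hk₁ := h (k + 1) hk
  have := hx.ne (k.lt_succ_self.trans hk) hi hki
  have := hx.ne (k.lt_succ_self.trans hk) hj hkj
  have := hx.ne hk hi hki'
  have := hx.ne hk hj hkj'
  rw [mem_uIoo_iff] at hk₀ hk₁
  rw [wraps_iff, wraps_iff]
  omega

theorem exists_insert_beside (hx : Set.InjOn x (Set.Iio n)) (hi : i < n) (above : Prop) :
    ∃ y, SameOrder 0 n y x ∧ Set.InjOn y (Set.Iio (n + 1)) ∧ Adjacent (n + 1) y i n ∧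
      (y i < y n ↔ above) := by
  classical
  set y : ℕ → ℤ := Function.update (fun k => 2 * x k) n (2 * x i + if above then 1 else -1)
  have hold : ∀ k < n, y k = 2 * x k := fun k hk => Function.update_of_ne hk.ne _ _
  have hnew : y n = 2 * x i + if above then 1 else -1 := Function.update_self _ _ _
  have hcase : above ∧ y n = 2 * x i + 1 ∨ ¬ above ∧ y n = 2 * x i - 1 := by
    split_ifs at hnew with habove
    · exact Or.inl ⟨habove, hnew⟩
    · exact Or.inr ⟨habove, hnew⟩
  refine ⟨y, fun j k _ hj _ hk => ?_, fun j hj k hk hjk => ?_, fun k hk => ?_, ?_⟩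
  · rw [hold j hj, hold k hk]
    omega
  · rw [Set.mem_Iio, Nat.lt_succ_iff_lt_or_eq] at hj hk
    rcases hj with hj | rfl <;> rcases hk with hk | rfl
    · rw [hold j hj, hold k hk] at hjk
      exact hx hj hk (by omega)
    · have := hold j hj
      omega
    · have := hold k hk
      omega
    · rfl
  · have := hold i hi
    rw [mem_uIoo_iff]
    rcases Nat.lt_succ_iff_lt_or_eq.1 hk with hk | rfl
    · have := hold k hk
      omega
    · omega
  · rw [hold i hi]
    rcases hcase with ⟨habove, h⟩ | ⟨habove, h⟩
    · exact iff_of_true (by omega) habove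
    · exact iff_of_false (by omega) habove

end Adjacent

section Extend

variable {up : ℕ → Prop} {c p : ℕ} {x y : ℕ → ℤ}

theorem IsFold.snoc (h : IsFold up (p + 1) y) (hy : Set.InjOn y (Set.Iio (p + 2)))
    (hlt : y p < y (p + 1) ↔ up p)
    (hw : ∀ i < p, i % 2 = p % 2 → (Wraps y i p ↔ Wraps y i (p + 1))) : IsFold up (p + 2) y where
  injOn := hy
  lt_succ_iff i hi := by
    rcases (show i < p ∨ p = i by omega) with hip | rfl
    · exact h.lt_succ_iff i (by omega)
    · exact hlt
  wraps_iff_succ i j hi hj hij := by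
    rcases (show i < p ∨ p = i by omega) with hip | rfl <;>
      rcases (show j < p ∨ p = j by omega) with hjp | rfl
    · exact h.wraps_iff_succ i j (by omega) (by omega) hij
    · exact hw i hip hij
    · have hwj := hw j hjp hij.symm
      have hne : ∀ i ≤ p, y i ≠ y (p + 1) := fun i hi =>
        hy.ne (show i < p + 2 by omega) (show p + 1 < p + 2 by omega) (by omega)
      have := hne j (by omega)
      have := hne (j + 1) (by omega)
      have := h.ne (i := j) (j := p) (by omega) (by omega) (by omega)
      have := h.ne (i := j + 1) (j := p) (by omega) (by omega) (by omega)
      rw [wraps_iff, wraps_iff] at hwj ⊢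
      omega
    · simp only [wraps_iff]
      omega

theorem IsFold.exists_tuck (h : IsFold up (p + 1) x) :
    ∃ y, IsFold up (p + 2) y ∧ SameOrder 0 (p + 1) y x ∧ Adjacent (p + 2) y p (p + 1) := by
  obtain ⟨y, hyx, hinj, hadj, hup⟩ := exists_insert_beside h.injOn p.lt_succ_self (up p)
  refine ⟨y, (hyx.isFold h).snoc hinj hup fun i hi hip => ?_, hyx, hadj⟩
  exact hadj.wraps_iff_wraps hinj (by omega) (by omega) (by omega) (by omega) (by omega)
    (by omega) (by omega)

theorem IsFold.exists_tucks (h : IsFold up (p + 1) x) (k : ℕ) :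
    ∃ y, IsFold up (p + 1 + k) y ∧ SameOrder 0 (p + 1) y x ∧
      (0 < k → Adjacent (p + 2) y p (p + 1)) := by
  induction k with
  | zero => exact ⟨x, h, fun _ _ _ _ _ _ => Iff.rfl, fun hk => absurd hk (lt_irrefl 0)⟩
  | succ k ih =>
    rcases k.eq_zero_or_pos with rfl | hk
    · obtain ⟨y, hy, hyx, hadj⟩ := h.exists_tuck
      exact ⟨y, hy, hyx, fun _ => hadj⟩
    · obtain ⟨y, hy, hyx, hadj⟩ := ih
      rw [Nat.add_right_comm] at hy
      obtain ⟨z, hz, hzy, -⟩ := hy.exists_tuck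
      rw [show p + k + 2 = p + 1 + (k + 1) by omega] at hz
      exact ⟨z, hz, (hzy.mono le_rfl (by omega)).trans hyx, fun _ =>
        (hzy.mono le_rfl (by omega)).adjacent (by omega) (by omega) (hadj hk)⟩

theorem IsFold.exists_wrap {r : ℕ} (h : IsFold up (p + 1) x) (hr : r + 1 < p)
    (hpar : r % 2 = p % 2) (hadj : Adjacent (p + 1) x (r + 1) p) (hup : up p ↔ ¬ up r)
    (hside : up p ↔ x p < x (r + 1)) :
    ∃ y, IsFold up (p + 2) y ∧ SameOrder 0 (p + 1) y x ∧ Adjacent (p + 2) y r (p + 1) ∧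
      (up p ↔ y r < y (p + 1)) ∧ Wraps y p (r + 1) := by
  obtain ⟨y, hyx, hinj, hadj', hup'⟩ :=
    exists_insert_beside h.injOn (show r < p + 1 by omega) (up p)
  have hy : IsFold up (p + 1) y := hyx.isFold h
  have hadjy : Adjacent (p + 1) y (r + 1) p := hyx.adjacent (by omega) (by omega) hadj
  have hside' : up p ↔ y p < y (r + 1) :=
    hside.trans (hyx p (r + 1) zero_le (by omega) zero_le (by omega)).symm
  have hold : y p < y (r + 1) ↔ ¬ y r < y (r + 1) := by
    rw [← hside', hup, hy.lt_succ_iff r (by omega)]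
  have hnew : y r < y (p + 1) ↔ y p < y (r + 1) := hup'.trans hside'
  have hrp := hadjy r (by omega)
  have := hy.ne (i := r) (j := r + 1) (by omega) (by omega) (by omega)
  have := hy.ne (i := p) (j := r + 1) (by omega) (by omega) (by omega)
  have := hy.ne (i := r) (j := p) (by omega) (by omega) (by omega)
  rw [mem_uIoo_iff] at hrp
  have horder : y p < y (r + 1) ∧ y (r + 1) < y r ∧ y r < y (p + 1) ∨
      y (p + 1) ≤ y r ∧ y r < y (r + 1) ∧ y (r + 1) < y p := by
    omega
  refine ⟨y, hy.snoc hinj (by rw [hside']; omega) fun i hi hip => ?_, hyx, hadj', hup'.symm, ?_⟩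
  · rcases eq_or_ne i r with rfl | hir
    · simp only [wraps_iff]
      omega
    · rw [← hadjy.wraps_iff_wraps hy.injOn (by omega) (by omega) (by omega) (by omega) (by omega)
        (by omega) (by omega), ← hy.wraps_iff_succ i r (by omega) (by omega) (by omega)]
      exact hadj'.wraps_iff_wraps hinj (by omega) (by omega) (by omega) (by omega) (by omega)
        (by omega) (by omega)
  · rw [wraps_iff]
    omega

theorem IsFold.exists_return (h : IsFold up (c + 1) x) (s : ℕ) (hs : s ≤ c)
    (hup : AlternatesOn up c (c + 2 + s))
    (hmirror : ∀ i, 0 < i → i ≤ s → (up (c + i) ↔ ¬ up (c - i))) :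
    ∃ y, IsFold up (c + 2 + s) y ∧ SameOrder 0 (c + 1) y x ∧
      Adjacent (c + 2 + s) y (c - s) (c + 1 + s) ∧ (up (c + s) ↔ y (c - s) < y (c + 1 + s)) ∧
      ∀ i < s, Wraps y (c + 1 + i) (c - i) := by
  induction s with
  | zero =>
    obtain ⟨y, hy, hyx, hadj⟩ := h.exists_tuck
    exact ⟨y, hy, hyx, hadj, (hy.lt_succ_iff c (by omega)).symm,
      fun i hi => absurd hi i.not_lt_zero⟩
  | succ s ih =>
    obtain ⟨y, hy, hyx, hadj, hside, hwraps⟩ :=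
      ih (by omega) (hup.mono (by omega)) fun i hi his => hmirror i hi (by omega)
    obtain ⟨r, hr⟩ : ∃ r, c - s = r + 1 := ⟨c - s - 1, by omega⟩
    have hr' : c - (s + 1) = r := by omega
    have hrev : up (c + s + 1) ↔ ¬ up (c + s) := hup.succ_iff (by omega) (by omega)
    have hmir : up (c + (s + 1)) ↔ ¬ up (c - (s + 1)) := hmirror (s + 1) (by omega) le_rfl
    rw [hr] at hadj hside
    rw [hr'] at hmir ⊢
    rw [show c + 2 + s = c + 1 + s + 1 by omega] at hy hadj
    rw [show c + (s + 1) = c + 1 + s by omega] at hmir ⊢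
    rw [show c + 2 + (s + 1) = c + 1 + s + 2 by omega]
    rw [show c + s + 1 = c + 1 + s by omega] at hrev
    have := hy.ne (i := r + 1) (j := c + 1 + s) (by omega) (by omega) (by omega)
    obtain ⟨z, hz, hzy, hadj', hside', hwrap⟩ :=
      hy.exists_wrap (by omega) (by omega) hadj hmir (by rw [hrev, hside]; omega)
    refine ⟨z, hz, (hzy.mono le_rfl (by omega)).trans hyx, hadj', hside', fun i hi => ?_⟩
    rcases (show i < s ∨ i = s by omega) with his | rfl
    · exact (hzy.wraps_iff_wraps zero_le (by omega) zero_le (by omega)).2 (hwraps i his)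
    · rw [hr]
      exact hwrap

end Extend

/-- The spiral in which face `i` lies at height `i`, alternately above and below face `0`. -/
def outwardSpiral (i : ℕ) : ℤ := if i % 2 = 0 then i else -i

section OutwardSpiral

variable {up : ℕ → Prop} {n : ℕ}

theorem wraps_outwardSpiral_iff {i j : ℕ} : Wraps outwardSpiral i j ↔ j < i := by
  simp only [wraps_iff, outwardSpiral]
  split_ifs <;> push_cast <;> omega

theorem isFold_outwardSpiral (hup : ∀ i, i + 1 < n → (up i ↔ i % 2 = 1)) :
    IsFold up n outwardSpiral where
  injOn i _ j _ hij := by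
    simp only [outwardSpiral] at hij
    split_ifs at hij <;> omega
  lt_succ_iff i hi := by
    rw [hup i hi]
    simp only [outwardSpiral]
    split_ifs <;> push_cast <;> omega
  wraps_iff_succ i j _ _ hij := by
    rw [wraps_outwardSpiral_iff, wraps_outwardSpiral_iff]
    omega

theorem exists_isFold_forall_wraps (hup : AlternatesOn up 0 n) :
    ∃ x, IsFold up n x ∧ ∀ i, Wraps x (i + 1) i := by
  have hspiral : ∀ i, Wraps outwardSpiral (i + 1) i :=
    fun i => wraps_outwardSpiral_iff.2 i.lt_succ_self
  by_cases h₀ : up 0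
  · have hdown : IsFold (fun i => ¬ up i) n outwardSpiral := isFold_outwardSpiral fun i hi => by
      have := hup i 0 zero_le hi zero_le (by omega)
      rw [iff_true_right h₀] at this
      rw [this]
      omega
    exact ⟨-outwardSpiral, by simpa only [not_not] using hdown.neg,
      fun i => wraps_neg.2 (hspiral i)⟩
  · refine ⟨outwardSpiral, isFold_outwardSpiral fun i hi => ?_, hspiral⟩
    have := hup i 0 zero_le hi zero_le (by omega)
    rw [iff_false_right h₀] at this
    rw [← not_iff_not, this]
    omega

end OutwardSpiral

section LowerBound

variable {up : ℕ → Prop} {c a : ℕ}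

-- Distinct `s` give distinct extensions: after step `s` tuck the rest in, so that crease
-- `c + 1 + s` does not wrap around face `r s`.
theorem le_card_extensions {τ : Equiv.Perm (Fin (c + 1))} {N : ℕ} {r : ℕ → ℕ} (hN : N ≤ a)
    (hr : ∀ i, r i ≤ c + 1 + i)
    (h : ∀ s < N, ∃ x, IsFold up (c + 2 + s) x ∧ SameOrder 0 (c + 1) x (height τ) ∧
      ∀ i < s, Wraps x (c + 1 + i) (r i)) :
    N ≤ (extensions up (c + 1 + a) τ).card := by
  have htuck : ∀ s < N, ∃ y, IsFold up (c + 1 + a) y ∧ SameOrder 0 (c + 1) y (height τ) ∧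
      (∀ i < s, Wraps y (c + 1 + i) (r i)) ∧ (s + 1 < a → ¬ Wraps y (c + 1 + s) (r s)) := by
    intro s hs
    obtain ⟨x, hx, hxτ, hwraps⟩ := h s hs
    rw [show c + 2 + s = c + 1 + s + 1 by omega] at hx
    obtain ⟨y, hy, hyx, hadj⟩ := hx.exists_tucks (a - 1 - s)
    rw [show c + 1 + s + 1 + (a - 1 - s) = c + 1 + a by omega] at hy
    refine ⟨y, hy, (hyx.mono le_rfl (by omega)).trans hxτ, fun i hi => ?_, fun hsa => ?_⟩
    · have := hr i
      exact (hyx.wraps_iff_wraps zero_le (by omega) zero_le (by omega)).2 (hwraps i hi)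
    · have := hr s
      exact (hadj (by omega)).not_wraps (by omega)
  choose! y hy hyτ hwraps hnot using htuck
  have hlt : ∀ s t, s < t → t < N →
      standardize (c + 1 + a) (y s) ≠ standardize (c + 1 + a) (y t) := by
    intro s t hst ht heq
    have hord : SameOrder 0 (c + 1 + a) (y s) (y t) :=
      ((standardize_eq_iff (hy s (by omega)).injOn).1 heq).trans
        (sameOrder_standardize (hy t ht).injOn)
    have := hr s
    exact hnot s (by omega) (by omega)
      ((hord.wraps_iff_wraps zero_le (by omega) zero_le (by omega)).2 (hwraps t ht s hst))
  rw [← Finset.card_range N]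
  refine Finset.card_le_card_of_injOn (fun s => standardize (c + 1 + a) (y s))
    (fun s hs => ?_) fun s hs t ht heq => ?_
  · have hs := Finset.mem_range.1 hs
    exact standardize_mem_extensions (by omega) (hy s hs) (hyτ s hs)
  · rw [Finset.coe_range, Set.mem_Iio] at hs ht
    rcases lt_trichotomy s t with hst | hst | hst
    · exact absurd heq (hlt s t hst ht)
    · exact hst
    · exact absurd heq.symm (hlt t s hst hs)

theorem min_mul_card_foldings_le {b : ℕ} (hbc : b ≤ c) (hup : AlternatesOn up c (c + 1 + a))
    (hmirror : ∀ i, 0 < i → i ≤ b → i < a → (up (c + i) ↔ ¬ up (c - i))) :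
    (foldings up (c + 1)).card * min (b + 1) a ≤ (foldings up (c + 1 + a)).card := by
  rw [card_foldings_eq_sum up (show c + 1 ≤ c + 1 + a by omega)]
  refine Finset.card_nsmul_le_sum _ _ _ fun τ hτ => ?_
  refine le_card_extensions (r := fun i => c - i) (min_le_right _ _) (fun i => by omega)
    fun s hs => ?_
  obtain ⟨x, hx, hxτ, -, -, hwraps⟩ := (mem_foldings.1 hτ).exists_return s (by omega)
    (hup.mono (by omega)) fun i hi his => hmirror i hi (by omega) (by omega)
  exact ⟨x, hx, hxτ, hwraps⟩

theorem le_card_foldings_add_one (hup : AlternatesOn up 0 (a + 1)) :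
    a ≤ (foldings up (a + 1)).card := by
  have hle : a ≤ (extensions up (0 + 1 + a) (1 : Equiv.Perm (Fin (0 + 1)))).card := by
    refine le_card_extensions (r := id) le_rfl (fun i => by simp only [id]; omega) fun s hs => ?_
    obtain ⟨x, hx, hwraps⟩ :=
      exists_isFold_forall_wraps (hup.mono (show 0 + 2 + s ≤ a + 1 by omega))
    refine ⟨x, hx, fun i j _ hi _ hj => ?_, fun i _ => ?_⟩
    · obtain rfl : i = 0 := by omega
      obtain rfl : j = 0 := by omega
      simp only [lt_self_iff_false]
    · rw [zero_add, add_comm]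
      exact hwraps i
  rw [zero_add, add_comm] at hle
  exact hle.trans (Finset.card_le_card fun σ hσ => mem_foldings.2 (mem_extensions.1 hσ).1)

end LowerBound

section Blocks

variable {m i k : ℕ} {a : ℕ → ℕ}

theorem blockAssignment_eq (hi : i < m) (hk : ∑ j ∈ Finset.range i, a j ≤ k)
    (hk' : k < ∑ j ∈ Finset.range i, a j + a i) :
    blockAssignment m a k = if Even i then MV.M else MV.V := by
  have hblock : Nat.findGreatest (fun t => ∑ j ∈ Finset.range t, a j ≤ k) m = i := by
    refine Nat.findGreatest_eq_iff.2 ⟨hi.le, fun _ => hk, fun {t} hit _ ht => ?_⟩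
    have := Finset.sum_le_sum_of_subset (f := a) (Finset.range_mono (Nat.succ_le_of_lt hit))
    rw [Finset.sum_range_succ] at this
    omega
  rw [blockAssignment, hblock]

theorem creaseUp_blockAssignment_iff (hi : i < m) (hk : ∑ j ∈ Finset.range i, a j ≤ k)
    (hk' : k < ∑ j ∈ Finset.range i, a j + a i) :
    creaseUp (blockAssignment m a) k ↔ (i + k) % 2 = 1 := by
  rw [creaseUp, blockAssignment_eq hi hk hk', ← Nat.odd_iff, Nat.odd_add]
  rcases Nat.even_or_odd i with h | h <;> rcases Nat.even_or_odd k with h' | h' <;>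
    simp [h, h', Nat.not_even_iff_odd.2, Nat.not_odd_iff_even.2]

theorem alternatesOn_blockAssignment (hi : i < m) :
    AlternatesOn (creaseUp (blockAssignment m a)) (∑ j ∈ Finset.range i, a j)
      (∑ j ∈ Finset.range i, a j + 1 + a i) := by
  intro k l hk hk' hl hl'
  rw [creaseUp_blockAssignment_iff hi hk (by omega), creaseUp_blockAssignment_iff hi hl (by omega)]
  omega

theorem le_card_foldings_blockAssignment (hi : i < m) :
    a 0 * ∏ j ∈ Finset.Ico 1 (i + 1), min (a (j - 1) + 1) (a j) ≤
      (foldings (creaseUp (blockAssignment m a)) (∑ j ∈ Finset.range (i + 1), a j + 1)).card := by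
  induction i with
  | zero =>
    have hup := alternatesOn_blockAssignment (a := a) hi
    rw [Finset.sum_range_zero, zero_add, add_comm] at hup
    rw [zero_add, Finset.Ico_self, Finset.prod_empty, mul_one, Finset.sum_range_one]
    exact le_card_foldings_add_one hup
  | succ i ih =>
    set c := ∑ j ∈ Finset.range (i + 1), a j with hc
    have hc' : c = ∑ j ∈ Finset.range i, a j + a i := Finset.sum_range_succ _ _
    rw [Finset.prod_Ico_succ_top (by omega), ← mul_assoc, Finset.sum_range_succ, ← hc,
      Nat.add_right_comm, Nat.add_sub_cancel]
    refine (Nat.mul_le_mul_right _ (ih (by omega))).trans (min_mul_card_foldings_le (by omega)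
      (alternatesOn_blockAssignment hi) fun j hj hji hja => ?_)
    rw [creaseUp_blockAssignment_iff (i := i + 1) hi (by omega) (by omega),
      creaseUp_blockAssignment_iff (i := i) (by omega) (by omega) (by omega)]
    omega

theorem card_foldings_blockAssignment_le (ha : ∀ j < m, 1 ≤ a j) (hi : i ≤ m) :
    (foldings (creaseUp (blockAssignment m a)) (∑ j ∈ Finset.range i, a j + 1)).card ≤
      ∏ j ∈ Finset.range i, (a j + 2 * ∑ l ∈ Finset.range j, a l) := by
  induction i with
  | zero => exact (card_foldings_one _).le
  | succ i ih =>
    have := ha i hi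
    rw [Finset.prod_range_succ, Finset.sum_range_succ, Nat.add_right_comm]
    refine (card_foldings_le_mul (alternatesOn_blockAssignment hi) (by omega)).trans ?_
    rw [Nat.add_sub_cancel_left]
    exact Nat.mul_le_mul_right _ (ih (by omega))

end Blocks

/-- Theorem: lower and upper bounds on the number of foldings of an arbitrary MV
assignment `⟦a_1, …, a_m⟧` (here indexed `a 0, …, a (m−1)`):
`a_1 · ∏_{i=2}^m min(a_{i−1}+1, a_i) ≤ c(⟦a_1,…,a_m⟧) ≤ a_1 · ∏_{i=2}^m (a_i + 2 Σ_{j<i} a_j)`. -/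
theorem stmt16 (m : ℕ) (hm : 1 ≤ m) (a : ℕ → ℕ) (ha : ∀ i < m, 1 ≤ a i) :
    a 0 * ∏ i ∈ Finset.Ico 1 m, min (a (i - 1) + 1) (a i) ≤
      foldCount (1 + ∑ j ∈ Finset.range m, a j) (blockAssignment m a) ∧
    foldCount (1 + ∑ j ∈ Finset.range m, a j) (blockAssignment m a) ≤
      a 0 * ∏ i ∈ Finset.Ico 1 m, (a i + 2 * ∑ j ∈ Finset.range i, a j) := by
  have hlower := le_card_foldings_blockAssignment (a := a) (Nat.sub_lt hm one_pos)
  have hupper := card_foldings_blockAssignment_le ha le_rfl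
  rw [Nat.sub_add_cancel hm] at hlower
  rw [Finset.prod_range_eq_mul_Ico _ hm, Finset.sum_range_zero, mul_zero, add_zero] at hupper
  rw [foldCount_eq_card_foldings, add_comm 1]
  exact ⟨hlower, hupper⟩
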